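/- arXiv:2309.11347 — 2 statements merged into one kernel-verified Lean document; each statement's English description precedes it below -/
import Mathlib

section
/- Let S be a Tychonoff pseudocompact right topological monoid, X a Tychonoff pseudocompact space, and π : S × X → X a separately continuous and quasicontinuous action such that π(1, x) = x for every x ∈ X. Then π is jointly continuous at every point of {1} × X. -/
open Filter Topology Set

/-- A space is pseudocompact if every continuous real-valued function on it is bounded. -/
def IsPseudocompact (X : Type*) [TopologicalSpace X] : Prop :=
  ∀ f : X → ℝ, Continuous f → ∃ M : ℝ, ∀ x : X, |f x| ≤ M

/-- A function is quasicontinuous. -/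
def QuasiContinuous {X Y : Type*} [TopologicalSpace X] [TopologicalSpace Y] (f : X → Y) : Prop :=
  ∀ x : X, ∀ V : Set Y, IsOpen V → f x ∈ V → ∀ U : Set X, IsOpen U → x ∈ U →
    ∃ W : Set X, IsOpen W ∧ W.Nonempty ∧ W ⊆ U ∧ f '' W ⊆ V

/-- Separate continuity of a function of two variables. -/
def SeparatelyContinuous {X Y Z : Type*} [TopologicalSpace X] [TopologicalSpace Y]
    [TopologicalSpace Z] (f : X × Y → Z) : Prop :=
  (∀ x : X, Continuous fun y : Y => f (x, y)) ∧ (∀ y : Y, Continuous fun x : X => f (x, y))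

/-- The space of continuous real-valued functions with the topology of pointwise
convergence, realized as a subspace of the product `Y → ℝ`. -/
def Cp (Y : Type*) [TopologicalSpace Y] : Type _ := {g : Y → ℝ // Continuous g}

noncomputable instance (Y : Type*) [TopologicalSpace Y] : TopologicalSpace (Cp Y) :=
  instTopologicalSpaceSubtype

/-- `(X, Y)` is a Grothendieck pair if every continuous image of `X` in `C_p(Y)`
has compact closure in `C_p(Y)`. -/
def GrothendieckPair (X Y : Type*) [TopologicalSpace X] [TopologicalSpace Y] : Prop :=
  ∀ F : X → Cp Y, Continuous F → IsCompact (closure (Set.range F))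

/-- `x` is a weak q-point relative to `A`. -/
def IsWeakQPoint {X : Type*} [TopologicalSpace X] (x : X) (A : Set X) : Prop :=
  ∃ φ : List (Set X) → Set X,
    (∀ l : List (Set X), (∀ U ∈ l, IsOpen U ∧ x ∈ U) →
      φ l ⊆ A ∧ ∃ T : Set X, T.Countable ∧ φ l ⊆ closure T) ∧
    (∀ U : ℕ → Set X, (∀ i : ℕ, IsOpen (U i) ∧ x ∈ U i) →
      (closure (⋃ i : ℕ, φ ((List.range (i + 1)).map U)) ∩ ⋂ i : ℕ, U i).Nonempty)

/-- A weak `q_D`-space. -/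
def IsWeakQDSpace (X : Type*) [TopologicalSpace X] : Prop :=
  ∃ D : Set X, Dense D ∧ ∀ A : Set X, A ⊆ D → ¬ IsClosed A → ∃ x : X, IsWeakQPoint x A

/-! A feebly compact space behaves, for sequences of nonempty open sets, as a countably compact one
does for sequences of points. So a double-limit argument is available, in which one first takes a
limit `z` of the sets `V n` and then a limit of the parts of the sets `U n` on which `f (·, z)` is
already small. It shows that a separately continuous `f : A × B → ℝ` cannot satisfy both
`f (s i, b) ≤ c` for `b ∈ V n`, `i < n`, and `f ≥ d > c` on `U n × V n`, where the `U n` decrease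
and `s n ∈ U n`.

For a continuous real function `g` on the phase space let `f := g ∘ π`, and let `f (1, x) < c`.
Quasicontinuity turns points `(s, y)` with `f (s, y) ≥ c` into boxes on which `f` is large, so by
the double-limit principle `1` is a limit of elements `s` for which `f < c` near `(s, x)`. Since
`π (s, π (t, y)) = π (s * t, y)` and `s * t → s` as `t → 1`, such an `s` satisfies
`g (π (s, ·)) < c` along the filter `map π (𝓝 (1, x))`, and a second use of the principle carries
this bound, up to an arbitrarily small loss, over to `1` itself.
-/

/-- Feeble compactness: no sequence of nonempty open sets is locally finite. For completely regular
spaces this is equivalent to pseudocompactness, and it is the form in which the latter is used. -/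
def IsFeeblyCompact (X : Type*) [TopologicalSpace X] : Prop :=
  ∀ W : ℕ → Set X, (∀ n, IsOpen (W n)) → (∀ n, (W n).Nonempty) → ¬ LocallyFinite W

theorem exists_continuous_nonneg_eq_support_subset {X : Type*} [TopologicalSpace X]
    [CompletelyRegularSpace X] {W : Set X} (hW : IsOpen W) {w : X} (hw : w ∈ W) {r : ℝ}
    (hr : 0 ≤ r) :
    ∃ f : X → ℝ, Continuous f ∧ (∀ x, 0 ≤ f x) ∧ f w = r ∧ Function.support f ⊆ W := by
  obtain ⟨g, hg, hgw, hgW⟩ := CompletelyRegularSpace.completely_regular_isOpen w W hW hw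
  refine ⟨fun x => r * (1 - g x), by fun_prop, fun x => mul_nonneg hr (sub_nonneg.2 (g x).2.2),
    by simp [hgw], Function.support_subset_iff'.2 fun x hx => ?_⟩
  simp [hgW hx]

theorem IsPseudocompact.isFeeblyCompact {X : Type*} [TopologicalSpace X] [CompletelyRegularSpace X]
    (hX : IsPseudocompact X) : IsFeeblyCompact X := by
  intro W hW hne hfin
  choose w hw using hne
  choose f hf hf0 hfw hfW using fun n : ℕ =>
    exists_continuous_nonneg_eq_support_subset (hW n) (hw n) n.cast_nonneg
  have hsupp : LocallyFinite fun n => Function.support (f n) := hfin.subset hfW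
  obtain ⟨M, hM⟩ := hX (fun x => ∑ᶠ n, f n x) (continuous_finsum hf hsupp)
  obtain ⟨n, hn⟩ := exists_nat_gt M
  have hle : (n : ℝ) ≤ M := calc
    (n : ℝ) = f n (w n) := (hfw n).symm
    _ ≤ ∑ᶠ k, f k (w n) :=
      single_le_finsum (f := fun k => f k (w n)) n (hsupp.point_finite (w n)) fun k => hf0 k (w n)
    _ ≤ M := (le_abs_self _).trans (hM (w n))
  exact hn.not_ge hle

theorem IsFeeblyCompact.exists_forall_isClosed_mem {X : Type*} [TopologicalSpace X]
    (hX : IsFeeblyCompact X) {W : ℕ → Set X} (hW : ∀ n, IsOpen (W n))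
    (hne : ∀ n, (W n).Nonempty) :
    ∃ x, ∀ C, IsClosed C → (∀ᶠ n in atTop, W n ⊆ C) → x ∈ C := by
  have hfin := hX W hW hne
  simp only [LocallyFinite, not_forall, not_exists, not_and] at hfin
  obtain ⟨x, hx⟩ := hfin
  refine ⟨x, fun C hC hWC => by_contra fun hxC => ?_⟩
  have hmeet : ∃ᶠ n in atTop, (W n ∩ Cᶜ).Nonempty :=
    Nat.frequently_atTop_iff_infinite.2 (hx Cᶜ (hC.isOpen_compl.mem_nhds hxC))
  obtain ⟨n, ⟨y, hyW, hyC⟩, hn⟩ := (hmeet.and_eventually hWC).exists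
  exact hyC (hn hyW)

section Composition

variable {A B Y Z : Type*} [TopologicalSpace A] [TopologicalSpace B] [TopologicalSpace Y]
  [TopologicalSpace Z]

theorem SeparatelyContinuous.continuous_comp {f : A × B → Y} (hf : SeparatelyContinuous f)
    {g : Y → Z} (hg : Continuous g) : SeparatelyContinuous (g ∘ f) :=
  ⟨fun a => hg.comp (hf.1 a), fun b => hg.comp (hf.2 b)⟩

theorem SeparatelyContinuous.comp_swap {f : A × B → Y} (hf : SeparatelyContinuous f) :
    SeparatelyContinuous (f ∘ Prod.swap) :=
  ⟨hf.2, hf.1⟩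

theorem QuasiContinuous.continuous_comp {f : A → Y} (hf : QuasiContinuous f) {g : Y → Z}
    (hg : Continuous g) : QuasiContinuous (g ∘ f) := by
  intro x V hV hx U hU hxU
  obtain ⟨W, hW, hWne, hWU, hWV⟩ := hf x (g ⁻¹' V) (hV.preimage hg) hx U hU hxU
  exact ⟨W, hW, hWne, hWU, by rwa [image_comp, image_subset_iff]⟩

theorem QuasiContinuous.comp_homeomorph {f : A → Y} (hf : QuasiContinuous f) (e : B ≃ₜ A) :
    QuasiContinuous (f ∘ e) := by
  intro x V hV hx U hU hxU
  obtain ⟨W, hW, hWne, hWU, hWV⟩ :=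
    hf (e x) V hV hx (e '' U) (e.isOpenMap U hU) (mem_image_of_mem e hxU)
  refine ⟨e ⁻¹' W, hW.preimage e.continuous, hWne.preimage e.surjective, ?_, ?_⟩
  · exact (preimage_mono hWU).trans (e.injective.preimage_image U).subset
  · rwa [image_comp, e.image_preimage]

theorem QuasiContinuous.exists_prod_subset {f : A × B → Y} (hf : QuasiContinuous f) {U : Set A}
    {V : Set B} {O : Set Y} (hU : IsOpen U) (hV : IsOpen V) (hO : IsOpen O) {p : A × B}
    (hp : p ∈ U ×ˢ V) (hfp : f p ∈ O) :
    ∃ (U' : Set A) (V' : Set B), IsOpen U' ∧ U'.Nonempty ∧ U' ⊆ U ∧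
      IsOpen V' ∧ V'.Nonempty ∧ V' ⊆ V ∧ U' ×ˢ V' ⊆ f ⁻¹' O := by
  obtain ⟨W, hW, ⟨⟨a, b⟩, hab⟩, hWUV, hWO⟩ := hf p O hO hfp (U ×ˢ V) (hU.prod hV) hp
  obtain ⟨U', V', hU', hV', ha, hb, hsub⟩ := isOpen_prod_iff.1 hW a b hab
  refine ⟨U', V', hU', ⟨a, ha⟩, fun s hs => ?_, hV', ⟨b, hb⟩, fun t ht => ?_,
    hsub.trans (image_subset_iff.1 hWO)⟩
  · exact (hWUV (hsub (mk_mem_prod hs hb))).1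
  · exact (hWUV (hsub (mk_mem_prod ha ht))).2

end Composition

section DoubleLimit

variable {A B Z : Type*} [TopologicalSpace A] [TopologicalSpace B] [TopologicalSpace Z]
  [LinearOrder Z] [OrderClosedTopology Z] [DenselyOrdered Z] {f : A × B → Z} {c d : Z}

theorem SeparatelyContinuous.le_of_antitone (hf : SeparatelyContinuous f)
    (hA : IsFeeblyCompact A) (hB : IsFeeblyCompact B) {s : ℕ → A} {U : ℕ → Set A} {V : ℕ → Set B}
    (hU : ∀ n, IsOpen (U n)) (hUanti : Antitone U) (hs : ∀ n, s n ∈ U n)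
    (hV : ∀ n, IsOpen (V n)) (hVne : ∀ n, (V n).Nonempty)
    (hle : ∀ i n, i < n → ∀ b ∈ V n, f (s i, b) ≤ c)
    (hge : ∀ n, ∀ p ∈ U n ×ˢ V n, d ≤ f p) : d ≤ c := by
  obtain ⟨z, hz⟩ := hB.exists_forall_isClosed_mem hV hVne
  have hsz : ∀ i, f (s i, z) ≤ c := fun i =>
    hz {b | f (s i, b) ≤ c} (isClosed_le (hf.1 (s i)) continuous_const)
      ((eventually_gt_atTop i).mono fun n hn => hle i n hn)
  refine le_of_forall_gt_imp_ge_of_dense fun c' hc' => ?_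
  obtain ⟨a, ha⟩ := hA.exists_forall_isClosed_mem (W := fun n => U n ∩ {a | f (a, z) < c'})
    (fun n => (hU n).inter (isOpen_lt (hf.2 z) continuous_const))
    (fun n => ⟨s n, hs n, (hsz n).trans_lt hc'⟩)
  have hab : ∀ m, ∀ b ∈ V m, d ≤ f (a, b) := fun m b hb =>
    ha {a | d ≤ f (a, b)} (isClosed_le continuous_const (hf.2 b))
      ((eventually_ge_atTop m).mono fun n hn y hy => hge m (y, b) ⟨hUanti hn hy.1, hb⟩)
  calc
    d ≤ f (a, z) := hz {b | d ≤ f (a, b)} (isClosed_le continuous_const (hf.1 a))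
      (Eventually.of_forall hab)
    _ ≤ c' := ha {a | f (a, z) ≤ c'} (isClosed_le (hf.2 z) continuous_const)
      (Eventually.of_forall fun _ y ⟨_, (hy : f (y, z) < c')⟩ => hy.le)

theorem SeparatelyContinuous.le_of_forall_exists_prod (hf : SeparatelyContinuous f)
    (hA : IsFeeblyCompact A) (hB : IsFeeblyCompact B) {D : Set A} {𝒰 : Set (Set A)}
    (h𝒰 : ∀ U ∈ 𝒰, IsOpen U) (h𝒰ne : 𝒰.Nonempty)
    (hstep : ∀ U ∈ 𝒰, ∀ F : Finset A, ↑F ⊆ D → ∃ (U' : Set A) (s : A) (V : Set B),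
      U' ∈ 𝒰 ∧ U' ⊆ U ∧ s ∈ U' ∩ D ∧ IsOpen V ∧ V.Nonempty ∧
        (∀ a ∈ F, ∀ b ∈ V, f (a, b) ≤ c) ∧ ∀ p ∈ U' ×ˢ V, d ≤ f p) : d ≤ c := by
  classical
  obtain ⟨U₀, hU₀⟩ := h𝒰ne
  let State := {q : Set A × Finset A // q.1 ∈ 𝒰 ∧ ↑q.2 ⊆ D}
  choose U' s V hU' hU'sub hs hV hVne hle hge using
    fun q : State => hstep q.1.1 q.2.1 q.1.2 q.2.2
  let next : State → State := fun q => ⟨(U' q, insert (s q) q.1.2), hU' q, by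
    simpa only [Finset.coe_insert, insert_subset_iff] using ⟨(hs q).2, q.2.2⟩⟩
  let q : ℕ → State := fun n => next^[n] ⟨(U₀, ∅), hU₀, by simp⟩
  have hq : ∀ n, q (n + 1) = next (q n) := fun n => Function.iterate_succ_apply' next n _
  have hUanti : Antitone fun n => U' (q n) := antitone_nat_of_succ_le fun n => by
    simpa only [hq] using hU'sub (q (n + 1))
  have hFmono : Monotone fun n => (q n).1.2 := monotone_nat_of_le_succ fun n => by
    simpa only [hq] using Finset.subset_insert (s (q n)) (q n).1.2
  have hsF : ∀ i n, i < n → s (q i) ∈ (q n).1.2 := fun i n hin =>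
    hFmono (Nat.succ_le_of_lt hin) (by
      simpa only [hq] using Finset.mem_insert_self (s (q i)) (q i).1.2)
  exact hf.le_of_antitone hA hB (fun n => h𝒰 _ (hU' (q n))) hUanti (fun n => (hs (q n)).1)
    (fun n => hV (q n)) (fun n => hVne (q n)) (fun i n hin => hle (q n) _ (hsF i n hin))
    (fun n => hge (q n))

theorem SeparatelyContinuous.setOf_lt_subset_closure (hf : SeparatelyContinuous f)
    (hqc : QuasiContinuous f) (hA : IsFeeblyCompact A) (hB : IsFeeblyCompact B) (b₀ : B) (c : Z) :
    {a | f (a, b₀) < c} ⊆ closure {a | ∀ᶠ p in 𝓝 (a, b₀), f p < c} := by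
  intro a₀ ha₀
  rw [mem_closure_iff]
  intro O hO ha₀O
  by_contra hbad
  obtain ⟨c₁, hc₁, hc₁c⟩ := exists_between (show f (a₀, b₀) < c from ha₀)
  obtain ⟨c₂, hc₁₂, hc₂c⟩ := exists_between hc₁c
  set U₀ := O ∩ {a | f (a, b₀) < c₁}
  have hU₀ : IsOpen U₀ := hO.inter (isOpen_lt (hf.2 b₀) continuous_const)
  refine hc₁₂.not_ge <| hf.le_of_forall_exists_prod hA hB (D := U₀)
    (𝒰 := {U | IsOpen U ∧ U.Nonempty ∧ U ⊆ U₀}) (fun U hU => hU.1)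
    ⟨U₀, hU₀, ⟨a₀, ha₀O, hc₁⟩, Subset.rfl⟩ ?_
  rintro U ⟨hU, ⟨a, ha⟩, hUU₀⟩ F hF
  set N := ⋂ s ∈ F, {b | f (s, b) < c₁}
  have hN : IsOpen N := isOpen_biInter_finset fun s _ => isOpen_lt (hf.1 s) continuous_const
  have hb₀N : b₀ ∈ N := mem_iInter₂.2 fun s hs => (hF hs).2
  have hfreq : ∃ᶠ p in 𝓝 (a, b₀), ¬ f p < c := fun h =>
    hbad ⟨a, (hUU₀ ha).1, h.mono fun _ => not_not.1⟩
  obtain ⟨p, hpc, hp⟩ :=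
    (hfreq.and_eventually ((hU.prod hN).mem_nhds (mk_mem_prod ha hb₀N))).exists
  obtain ⟨U', V, hU', ⟨s, hs⟩, hU'U, hV, hVne, hVN, hUV⟩ :=
    hqc.exists_prod_subset hU hN isOpen_Ioi hp (hc₂c.trans_le (not_lt.1 hpc))
  exact ⟨U', s, V, ⟨hU', ⟨s, hs⟩, hU'U.trans hUU₀⟩, hU'U, ⟨hs, hUU₀ (hU'U hs)⟩, hV, hVne,
    fun t ht b hb => (mem_iInter₂.1 (hVN hb) t ht).le, fun q hq => (hUV hq).le⟩

theorem SeparatelyContinuous.setOf_gt_subset_closure (hf : SeparatelyContinuous f)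
    (hqc : QuasiContinuous f) (hA : IsFeeblyCompact A) (hB : IsFeeblyCompact B) (a₀ : A) (c : Z) :
    {b | c < f (a₀, b)} ⊆ closure {b | ∀ᶠ p in 𝓝 (a₀, b), c < f p} := by
  have h := (hf.continuous_comp continuous_toDual).comp_swap.setOf_lt_subset_closure
    ((hqc.continuous_comp continuous_toDual).comp_homeomorph (Homeomorph.prodComm B A))
    hB hA a₀ (OrderDual.toDual c)
  have hswap : ∀ b, 𝓝 (b, a₀) = map Prod.swap (𝓝 (a₀, b)) := fun b =>
    ((Homeomorph.prodComm A B).map_nhds_eq (a₀, b)).symm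
  simpa [hswap] using h

theorem SeparatelyContinuous.eventually_lt_of_mem_closure (hf : SeparatelyContinuous f)
    (hqc : QuasiContinuous f) (hA : IsFeeblyCompact A) (hB : IsFeeblyCompact B) (hcd : c < d)
    {D : Set A} {l : Filter B} (hD : ∀ s ∈ D, ∀ᶠ b in l, f (s, b) < c) {a : A}
    (ha : a ∈ closure D) : ∀ᶠ b in l, f (a, b) < d := by
  by_contra hfreq
  obtain ⟨d', hcd', hd'⟩ := exists_between hcd
  refine hcd'.not_ge <| hf.le_of_forall_exists_prod hA hB (D := D)
    (𝒰 := {U | IsOpen U ∧ a ∈ U}) (fun U hU => hU.1) ⟨univ, isOpen_univ, mem_univ a⟩ ?_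
  rintro U ⟨hU, haU⟩ F hF
  set N := ⋂ s ∈ F, {b | f (s, b) < c}
  have hN : IsOpen N := isOpen_biInter_finset fun s _ => isOpen_lt (hf.1 s) continuous_const
  have hNl : ∀ᶠ b in l, b ∈ N :=
    (biInter_finset_mem F).2 fun s hs => hD s (hF hs)
  obtain ⟨b₀, hb₀, hb₀N⟩ := ((not_eventually.1 hfreq).and_eventually hNl).exists
  obtain ⟨b, hbN, hb⟩ := mem_closure_iff.1
    (hf.setOf_gt_subset_closure hqc hA hB a d' (hd'.trans_le (not_lt.1 hb₀))) N hN hb₀N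
  obtain ⟨U', V, hU', haU', hV, hbV, hUV⟩ := mem_nhds_prod_iff'.1 hb
  obtain ⟨s, hs⟩ := mem_closure_iff.1 ha (U ∩ U') (hU.inter hU') ⟨haU, haU'⟩
  exact ⟨U ∩ U', s, V ∩ N, ⟨hU.inter hU', haU, haU'⟩, inter_subset_left, hs, hV.inter hN,
    ⟨b, hbV, hbN⟩, fun t ht y hy => (mem_iInter₂.1 hy.2 t ht).le,
    fun p hp => (hUV ⟨hp.1.2, hp.2.1⟩).le⟩

end DoubleLimit

theorem continuousAt_of_forall_upperSemicontinuousAt_comp {Y Z : Type*} [TopologicalSpace Y]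
    [TopologicalSpace Z] [CompletelyRegularSpace Z] {u : Y → Z} {y : Y}
    (h : ∀ g : Z → ℝ, Continuous g → UpperSemicontinuousAt (g ∘ u) y) : ContinuousAt u y := by
  refine tendsto_nhds.2 fun O hO hyO => ?_
  obtain ⟨g, hg, hg0, hg1⟩ := CompletelyRegularSpace.completely_regular_isOpen (u y) O hO hyO
  have hlt : ∀ᶠ t in 𝓝 y, (g (u t) : ℝ) < 1 :=
    upperSemicontinuousAt_iff.1 (h (fun z => g z) (by fun_prop)) 1 (by simp [hg0])
  exact hlt.mono fun t ht => by_contra fun htO => ht.ne (by simp [hg1 htO])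

section Action

variable {S X : Type*} [MulOneClass S] [TopologicalSpace S] [TopologicalSpace X]

theorem upperSemicontinuousAt_comp_action_one
    (hS_right : ∀ s : S, Continuous fun t : S => s * t)
    (hS : IsFeeblyCompact S) (hX : IsFeeblyCompact X) {π : S × X → X}
    (haction : ∀ (s t : S) (x : X), π (s * t, x) = π (s, π (t, x)))
    (hsep : SeparatelyContinuous π) (hqc : QuasiContinuous π) {g : X → ℝ} (hg : Continuous g)
    (x : X) : UpperSemicontinuousAt (g ∘ π) (1, x) := by
  rw [upperSemicontinuousAt_iff]
  intro d hd
  obtain ⟨c, hc, hcd⟩ := exists_between hd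
  have hf := hsep.continuous_comp hg
  have hfqc := hqc.continuous_comp hg
  have hone_mem : (1 : S) ∈ closure {s | ∀ᶠ p in 𝓝 (s, x), g (π p) < c} :=
    hf.setOf_lt_subset_closure hfqc hS hX x c hc
  have hnear : ∀ s : S, (∀ᶠ p in 𝓝 (s, x), g (π p) < c) →
      ∀ᶠ y in map π (𝓝 (1, x)), g (π (s, y)) < c := by
    intro s hs
    have hmul : Tendsto (fun p : S × X => (s * p.1, p.2)) (𝓝 (1, x)) (𝓝 (s, x)) :=
      (((hS_right s).comp continuous_fst).prodMk continuous_snd).tendsto' _ _ (by simp)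
    simpa only [eventually_map, haction] using hmul.eventually hs
  have hlim : ∀ᶠ y in map π (𝓝 (1, x)), g (π (1, y)) < d :=
    hf.eventually_lt_of_mem_closure hfqc hS hX hcd hnear hone_mem
  simpa only [Function.comp_apply, eventually_map, ← haction, one_mul, Prod.mk.eta] using hlim

theorem lawson_pseudocompact_identity_continuity_general [CompletelyRegularSpace X]
    (hS_right : ∀ s : S, Continuous fun t : S => s * t)
    (hS : IsFeeblyCompact S) (hX : IsFeeblyCompact X) {π : S × X → X}
    (haction : ∀ (s t : S) (x : X), π (s * t, x) = π (s, π (t, x)))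
    (hsep : SeparatelyContinuous π) (hqc : QuasiContinuous π) (x : X) : ContinuousAt π (1, x) :=
  continuousAt_of_forall_upperSemicontinuousAt_comp fun _ hg =>
    upperSemicontinuousAt_comp_action_one hS_right hS hX haction hsep hqc hg x

end Action

theorem lawson_pseudocompact_identity_continuity
    {S X : Type*} [Monoid S] [TopologicalSpace S] [TopologicalSpace X]
    [T35Space S] [T35Space X]
    (hS_right : ∀ s : S, Continuous fun t : S => s * t)
    (hS : IsPseudocompact S) (hX : IsPseudocompact X)
    (π : S × X → X)
    (haction : ∀ (s t : S) (x : X), π (s * t, x) = π (s, π (t, x)))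
    (hone : ∀ x : X, π (1, x) = x)
    (hsep : SeparatelyContinuous π) (hqc : QuasiContinuous π) :
    ∀ x : X, ContinuousAt π (1, x) :=
  lawson_pseudocompact_identity_continuity_general hS_right hS.isFeeblyCompact hX.isFeeblyCompact
    haction hsep hqc
end

section
/- Let S be a Tychonoff semitopological monoid such that (S, S) is a Grothendieck pair, and let G be a subgroup of S whose identity is the identity 1 of S (that is, a subsemigroup of S containing 1 in which every element has an inverse with respect to 1). Then G, with the subspace topology, is a topological group. -/
open Filter Topology Set

/-!
Suppose that `Y` is pseudocompact and `F : X → Cp Y` is continuous with relatively compact range.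
Then `F` has points of continuity for the uniform distance: otherwise every nonempty open subset of
`X` contains two nonempty open subsets on which `F` is uniformly `ε`-separated, and limits along the
branches of the resulting Cantor scheme form an uncountable uniformly `ε`-separated family in the
closure of a countable set `D ⊆ Cp Y`. This is impossible, because functions in that closure factor
through the map `Y → D → ℝ`, whose range `M` is compact and metrizable, and `C(M, ℝ)` is separable.

Applied to `g ↦ f (g * ·)` on the group, this gives a point of uniform continuity, which group
translations move to `1`. So, as `g → 1`, the functions `f (g * ·)` converge uniformly to `f` for
every continuous `f : S → ℝ`. Complete regularity turns this into joint continuity of the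
multiplication and continuity of the inversion.
-/

namespace Cp

variable {Y : Type*} [TopologicalSpace Y]

theorem continuous_apply (y : Y) : Continuous fun k : Cp Y => k.1 y :=
  (_root_.continuous_apply y).comp continuous_subtype_val

theorem apply_eq_apply_of_mem_closure {D : Set (Cp Y)} {k : Cp Y} (hk : k ∈ closure D) {y y' : Y}
    (h : ∀ d ∈ D, d.1 y = d.1 y') : k.1 y = k.1 y' :=
  closure_minimal h (isClosed_eq (continuous_apply y) (continuous_apply y')) hk

end Cp

section Separated

theorem countable_of_pairwise_le_dist {M ι : Type*} [PseudoMetricSpace M]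
    [TopologicalSpace.SeparableSpace M] {ε : ℝ} (hε : 0 < ε) {u : ι → M}
    (hu : Pairwise fun i j => ε ≤ dist (u i) (u j)) : Countable ι := by
  have hdisj : Pairwise (Function.onFun Disjoint fun i => Metric.ball (u i) (ε / 2)) :=
    fun i j hij => Metric.ball_disjoint_ball (by linarith [hu hij])
  exact hdisj.countable_of_isOpen_disjoint (fun _ => Metric.isOpen_ball)
    fun i => ⟨u i, Metric.mem_ball_self (half_pos hε)⟩

theorem exists_antitone_cantorScheme {α : Type*} {P : Set α → Prop} {R : Set α → Set α → Prop}
    [Std.Symm R] {U₀ : Set α} (hU₀ : P U₀)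
    (hsplit : ∀ U, P U → ∃ V ⊆ U, ∃ W ⊆ U, P V ∧ P W ∧ R V W) :
    ∃ A : List Bool → Set α, (∀ l, P (A l)) ∧ CantorScheme.Antitone A ∧
      ∀ l, Pairwise fun a b => R (A (a :: l)) (A (b :: l)) := by
  choose! V hVU W hWU hPV hPW hVW using hsplit
  let A : List Bool → Set α := List.rec U₀ fun b _ U => bif b then V U else W U
  have hP : ∀ l, P (A l) := by
    intro l
    induction l with
    | nil => exact hU₀
    | cons b l ih =>
      cases b
      · exact hPW _ ih
      · exact hPV _ ih
  refine ⟨A, hP, fun l b => ?_, fun l => ?_⟩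
  · cases b
    · exact hWU _ (hP l)
    · exact hVU _ (hP l)
  · rintro (_ | _) (_ | _) hne
    · exact absurd rfl hne
    · exact symm_of R (hVW _ (hP l))
    · exact hVW _ (hP l)
    · exact absurd rfl hne

theorem exists_rel_res_of_ne {α β : Type*} {A : List β → α} {R : α → α → Prop}
    (hA : ∀ l, Pairwise fun a b => R (A (a :: l)) (A (b :: l))) {x x' : ℕ → β} (hne : x ≠ x') :
    ∃ n, R (A (PiNat.res x n)) (A (PiNat.res x' n)) := by
  let n := PiNat.firstDiff x x'
  have hres : PiNat.res x n = PiNat.res x' n :=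
    PiNat.res_eq_res.2 fun _ hm => PiNat.apply_eq_of_lt_firstDiff hm
  refine ⟨n + 1, ?_⟩
  rw [PiNat.res_succ, PiNat.res_succ, ← hres]
  exact hA _ (PiNat.apply_firstDiff_ne hne)

theorem exists_isOpen_subsets_le_dist {X Y Z : Type*} [TopologicalSpace X] [PseudoMetricSpace Z]
    {f : X → Y → Z} (hf : ∀ y, Continuous fun x => f x y) {ε : ℝ} (hε : 0 < ε) {x : X}
    (hx : ∃ᶠ x' in 𝓝 x, ∃ y, ε < dist (f x' y) (f x y)) {U : Set X} (hU : IsOpen U) (hxU : x ∈ U) :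
    ∃ V ⊆ U, ∃ W ⊆ U, (IsOpen V ∧ V.Nonempty) ∧ (IsOpen W ∧ W.Nonempty) ∧
      ∃ y, ∀ v ∈ V, ∀ w ∈ W, ε / 3 ≤ dist (f v y) (f w y) := by
  obtain ⟨x', ⟨y, hy⟩, hx'U⟩ := (hx.and_eventually (hU.mem_nhds hxU)).exists
  have hball : ∀ z : Z, IsOpen {v | dist (f v y) z < ε / 3} := fun z =>
    isOpen_lt ((hf y).dist continuous_const) continuous_const
  refine ⟨U ∩ {v | dist (f v y) (f x' y) < ε / 3}, inter_subset_left,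
    U ∩ {w | dist (f w y) (f x y) < ε / 3}, inter_subset_left,
    ⟨hU.inter (hball _), x', hx'U, by simpa using hε⟩,
    ⟨hU.inter (hball _), x, hxU, by simpa using hε⟩, y, fun v hv w hw => ?_⟩
  have hv' : dist (f x' y) (f v y) < ε / 3 := dist_comm (f x' y) _ ▸ hv.2
  have hw' : dist (f w y) (f x y) < ε / 3 := hw.2
  linarith [dist_triangle4 (f x' y) (f v y) (f w y) (f x y)]

end Separated

namespace IsPseudocompact

variable {X Y : Type*} [TopologicalSpace X] [TopologicalSpace Y]

theorem isClosed_range {M : Type*} [TopologicalSpace M] [TopologicalSpace.MetrizableSpace M]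
    (hY : IsPseudocompact Y) {H : Y → M} (hH : Continuous H) : IsClosed (range H) := by
  let := TopologicalSpace.metrizableSpaceMetric M
  refine isClosed_of_closure_subset fun a ha => ?_
  by_contra hna
  have hpos : ∀ y, 0 < dist a (H y) := fun y => dist_pos.2 fun h => hna ⟨y, h.symm⟩
  obtain ⟨B, hB⟩ := hY (fun y => (dist a (H y))⁻¹)
    ((continuous_const.dist hH).inv₀ fun y => (hpos y).ne')
  obtain ⟨_, ⟨y, rfl⟩, hy⟩ := Metric.mem_closure_iff.1 ha (|B| + 1)⁻¹ (by positivity)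
  have hlarge : |B| + 1 < (dist a (H y))⁻¹ := (lt_inv_comm₀ (hpos y) (by positivity)).1 hy
  linarith [le_abs_self B, (le_abs_self _).trans (hB y)]

theorem isCompact_range {ι : Type*} [Countable ι] (hY : IsPseudocompact Y) {H : Y → ι → ℝ}
    (hH : Continuous H) : IsCompact (range H) := by
  choose B hB using fun i => hY _ ((continuous_apply i).comp hH)
  refine (isCompact_univ_pi fun i => isCompact_Icc (a := -B i) (b := B i)).of_isClosed_subset
    (hY.isClosed_range hH) ?_
  rintro _ ⟨y, rfl⟩ i -
  exact abs_le.1 (hB i y)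

theorem exists_continuousMap_range_eq {ι : Type*} [Countable ι] (hY : IsPseudocompact Y)
    {H : Y → ι → ℝ} (hH : Continuous H) {k : Y → ℝ} (hk : Continuous k)
    (hkH : k.FactorsThrough H) : ∃ κ : C(range H, ℝ), ∀ y, κ (rangeFactorization H y) = k y := by
  let P : Y → Option ι → ℝ := fun y o => o.elim (k y) (H y)
  have hP : Continuous P := continuous_pi <| Option.forall.2 ⟨hk, continuous_pi_iff.1 hH⟩
  have : CompactSpace (range P) := isCompact_iff_compactSpace.1 (hY.isCompact_range hP)
  let value : C(range P, ℝ) :=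
    ⟨fun r => r.1 none, (continuous_apply none).comp continuous_subtype_val⟩
  have hmaps : MapsTo (fun r i => r (some i)) (range P) (range H) := by
    rintro _ ⟨y, rfl⟩
    exact ⟨y, rfl⟩
  let proj : C(range P, range H) := ⟨hmaps.restrict, Continuous.restrict hmaps (by fun_prop)⟩
  have hproj : IsQuotientMap proj := by
    refine proj.continuous.isClosedMap.isQuotientMap proj.continuous ?_
    rintro ⟨_, y, rfl⟩
    exact ⟨rangeFactorization P y, rfl⟩
  have hvalue : Function.FactorsThrough value proj := by
    rintro ⟨_, y, rfl⟩ ⟨_, y', rfl⟩ h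
    exact hkH (congrArg Subtype.val h)
  exact ⟨hproj.lift value hvalue, fun y =>
    DFunLike.congr_fun (hproj.lift_comp value hvalue) (rangeFactorization P y)⟩

theorem countable_of_mem_closure_of_separated (hY : IsPseudocompact Y) {D : Set (Cp Y)}
    (hD : D.Countable) {ι : Type*} {k : ι → Cp Y} (hk : ∀ i, k i ∈ closure D) {ε : ℝ} (hε : 0 < ε)
    (hsep : Pairwise fun i j => ∃ y, ε ≤ dist ((k i).1 y) ((k j).1 y)) : Countable ι := by
  have := hD.to_subtype
  let H : Y → D → ℝ := fun y d => d.1.1 y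
  have hH : Continuous H := continuous_pi fun d => d.1.2
  have : CompactSpace (range H) := isCompact_iff_compactSpace.1 (hY.isCompact_range hH)
  choose κ hκ using fun i => hY.exists_continuousMap_range_eq hH (k i).2 fun y y' h =>
    Cp.apply_eq_apply_of_mem_closure (hk i) fun d hd => congrFun h ⟨d, hd⟩
  refine countable_of_pairwise_le_dist hε (u := κ) fun i j hij => ?_
  obtain ⟨y, hy⟩ := hsep hij
  rw [← hκ i, ← hκ j] at hy
  exact hy.trans (ContinuousMap.dist_apply_le_dist _)

theorem countable_of_eventually_separated (hY : IsPseudocompact Y) {D : Set (Cp Y)}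
    (hD : D.Countable) (hK : IsCompact (closure D)) {ι : Type*} {s : ι → ℕ → Cp Y}
    (hs : ∀ i n, s i n ∈ D) {ε : ℝ} (hε : 0 < ε)
    (hsep : Pairwise fun i j => ∃ y, ∀ᶠ n in atTop, ε ≤ dist ((s i n).1 y) ((s j n).1 y)) :
    Countable ι := by
  have hlim : ∀ i, ∃ k ∈ closure D, Tendsto (s i) (hyperfilter ℕ) (𝓝 k) := fun i =>
    hK.ultrafilter_le_nhds ((hyperfilter ℕ).map (s i))
      (tendsto_principal.2 (Eventually.of_forall fun n => subset_closure (hs i n)))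
  choose k hkD hk using hlim
  refine hY.countable_of_mem_closure_of_separated hD hkD hε fun i j hij => ?_
  obtain ⟨y, hy⟩ := hsep hij
  have heval : ∀ i, Tendsto (fun n => (s i n).1 y) (hyperfilter ℕ) (𝓝 ((k i).1 y)) := fun i =>
    ((Cp.continuous_apply y).tendsto (k i)).comp (hk i)
  exact ⟨y, ge_of_tendsto ((heval i).dist (heval j)) (hy.filter_mono Nat.hyperfilter_le_atTop)⟩

theorem exists_eventually_forall_dist_le [Nonempty X] (hY : IsPseudocompact Y) {F : X → Cp Y}
    (hF : Continuous F) (hK : IsCompact (closure (range F))) {ε : ℝ} (hε : 0 < ε) :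
    ∃ x, ∀ᶠ x' in 𝓝 x, ∀ y, dist ((F x').1 y) ((F x).1 y) ≤ ε := by
  have : Uncountable (ℕ → Bool) := by
    rw [← Cardinal.aleph0_lt_mk_iff]
    simp [Cardinal.aleph0_lt_continuum]
  by_contra! hcon
  let Separated : Set X → Set X → Prop := fun V W =>
    ∃ y, ∀ v ∈ V, ∀ w ∈ W, ε / 3 ≤ dist ((F v).1 y) ((F w).1 y)
  have : Std.Symm Separated :=
    ⟨fun _ _ ⟨y, hy⟩ => ⟨y, fun w hw v hv => dist_comm ((F v).1 y) _ ▸ hy v hv w hw⟩⟩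
  obtain ⟨A, hA, hanti, hsep⟩ := exists_antitone_cantorScheme (R := Separated)
    (P := fun U => IsOpen U ∧ U.Nonempty) ⟨isOpen_univ, univ_nonempty⟩ fun U ⟨hU, x, hxU⟩ =>
      exists_isOpen_subsets_le_dist (fun y => (Cp.continuous_apply y).comp hF) hε (hcon x) hU hxU
  choose p hp using fun l => (hA l).2
  have hp_mem : ∀ (b : ℕ → Bool) {n m : ℕ}, n ≤ m → p (PiNat.res b m) ∈ A (PiNat.res b n) :=
    fun b _ _ hnm => antitone_nat_of_succ_le (f := fun n => A (PiNat.res b n))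
      (fun n => hanti (PiNat.res b n) (b n)) hnm (hp _)
  have hrange : range (F ∘ p) ⊆ range F := range_comp_subset_range p F
  have hcount : Countable (ℕ → Bool) :=
    hY.countable_of_eventually_separated (countable_range (F ∘ p))
      (hK.of_isClosed_subset isClosed_closure (closure_mono hrange))
      (s := fun b n => F (p (PiNat.res b n))) (fun b n => mem_range_self (PiNat.res b n))
      (div_pos hε three_pos) fun b b' hne => by
        obtain ⟨n, y, hy⟩ := exists_rel_res_of_ne hsep hne
        exact ⟨y, (eventually_ge_atTop n).mono fun m hm =>
          hy _ (hp_mem b hm) _ (hp_mem b' hm)⟩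
  exact not_countable hcount

end IsPseudocompact

theorem GrothendieckPair.isPseudocompact {X Y : Type*} [TopologicalSpace X] [TopologicalSpace Y]
    [Nonempty Y] (h : GrothendieckPair X Y) : IsPseudocompact X := by
  intro f hf
  obtain ⟨y⟩ := ‹Nonempty Y›
  let F : X → Cp Y := fun x => ⟨fun _ => f x, continuous_const⟩
  have hF : Continuous F := Continuous.subtype_mk (continuous_pi fun _ => hf) _
  obtain ⟨M, hM⟩ := ((h F hF).image (Cp.continuous_apply y)).isBounded.exists_norm_le
  exact ⟨M, fun x => hM _ (mem_image_of_mem _ (subset_closure (mem_range_self x)))⟩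

section CompletelyRegular

variable {X α : Type*} [TopologicalSpace X] [CompletelyRegularSpace X] {l : Filter α} {x : X}

theorem tendsto_nhds_iff_forall_continuousMap {u : α → X} :
    Tendsto u l (𝓝 x) ↔ ∀ f : C(X, ℝ), Tendsto (fun a => f (u a)) l (𝓝 (f x)) := by
  refine ⟨fun h f => (f.continuous.tendsto x).comp h, fun h U hU => ?_⟩
  obtain ⟨V, hVU, hV, hxV⟩ := mem_nhds_iff.1 hU
  obtain ⟨f, hf, hfx, hfV⟩ := CompletelyRegularSpace.completely_regular_isOpen x V hV hxV
  have hlt : ∀ᶠ a in l, (f (u a) : ℝ) < 1 :=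
    (h ⟨fun z => f z, by fun_prop⟩).eventually_lt_const (by simp [hfx])
  refine mem_map.2 (hlt.mono fun a ha => ?_)
  refine hVU (by_contra fun haV => ?_)
  simp [hfV haV] at ha

theorem tendsto_apply_iff_of_forall_tendstoUniformly {ι : Type*} {p : Filter ι} {T : ι → X → X}
    (hT : ∀ f : C(X, ℝ), TendstoUniformly (fun i z => f (T i z)) f p) {u : α → ι} {v : α → X}
    (hu : Tendsto u l p) : Tendsto (fun a => T (u a) (v a)) l (𝓝 x) ↔ Tendsto v l (𝓝 x) := by
  simp only [tendsto_nhds_iff_forall_continuousMap (x := x)]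
  refine forall_congr' fun f => (Uniform.tendsto_congr ?_).symm
  exact (tendstoUniformly_iff_tendsto.1 (hT f)).comp (hu.prodMk tendsto_top)

end CompletelyRegular

/-- The left translate `y ↦ f (x * y)` of a continuous function `f`. -/
def leftTranslate {S : Type*} [Mul S] [TopologicalSpace S] [SeparatelyContinuousMul S]
    (f : C(S, ℝ)) (x : S) : Cp S :=
  ⟨fun y => f (x * y), by fun_prop⟩

theorem continuous_leftTranslate {S : Type*} [Mul S] [TopologicalSpace S]
    [SeparatelyContinuousMul S] (f : C(S, ℝ)) : Continuous (leftTranslate f) :=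
  Continuous.subtype_mk (continuous_pi fun _ => by fun_prop) _

section Monoid

variable {S : Type*} [Monoid S] [TopologicalSpace S] [SeparatelyContinuousMul S]
variable {G : Type*} [Group G] [TopologicalSpace G] {φ : G →* S}

theorem tendstoUniformly_leftTranslate [SeparatelyContinuousMul G] (hS : IsPseudocompact S)
    (hφ : Continuous φ) {f : C(S, ℝ)}
    (hf : IsCompact (closure (range fun g => leftTranslate f (φ g)))) :
    TendstoUniformly (fun g s => f (φ g * s)) f (𝓝 1) := by
  rw [Metric.tendstoUniformly_iff]
  intro ε hε
  obtain ⟨g₀, hg₀⟩ := hS.exists_eventually_forall_dist_le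
    ((continuous_leftTranslate f).comp hφ) hf (half_pos hε)
  have hmul : Tendsto (fun g => g * g₀) (𝓝 1) (𝓝 g₀) := by
    simpa using (tendsto_id (x := 𝓝 (1 : G))).mul_const g₀
  filter_upwards [hmul.eventually hg₀] with g hg s
  have hs : dist (f (φ (g * g₀) * (φ g₀⁻¹ * s))) (f (φ g₀ * (φ g₀⁻¹ * s))) ≤ ε / 2 :=
    hg (φ g₀⁻¹ * s)
  simp only [← mul_assoc, ← map_mul, mul_inv_cancel_right, mul_inv_cancel, map_one, one_mul] at hs
  rw [dist_comm]
  linarith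

theorem isTopologicalGroup_of_isInducing [CompletelyRegularSpace S] (hS : IsPseudocompact S)
    (hφ : IsInducing φ)
    (hcompact : ∀ f : C(S, ℝ), IsCompact (closure (range fun g => leftTranslate f (φ g)))) :
    IsTopologicalGroup G := by
  have : SeparatelyContinuousMul G := hφ.separatelyContinuousMul φ
  have hunif : ∀ f : C(S, ℝ), TendstoUniformly (fun g s => f (φ g * s)) f (𝓝 1) := fun f =>
    tendstoUniformly_leftTranslate hS hφ.continuous (hcompact f)
  refine { continuous_mul := ?_, continuous_inv := ?_ }
  · refine continuous_iff_continuousAt.2 fun ⟨a, b⟩ => hφ.tendsto_nhds_iff.2 ?_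
    have hfst : Tendsto (fun p : G × G => p.1 * a⁻¹) (𝓝 (a, b)) (𝓝 1) := by
      simpa using (continuous_fst.tendsto (a, b)).mul_const a⁻¹
    have hsnd : Tendsto (fun p : G × G => φ (a * p.2)) (𝓝 (a, b)) (𝓝 (φ (a * b))) :=
      (hφ.continuous.tendsto _).comp ((continuous_snd.tendsto (a, b)).const_mul a)
    refine ((tendsto_apply_iff_of_forall_tendstoUniformly hunif hfst).2 hsnd).congr fun p => ?_
    rw [← map_mul, ← mul_assoc, inv_mul_cancel_right, Function.comp_apply]
  · refine continuous_iff_continuousAt.2 fun a => hφ.tendsto_nhds_iff.2 ?_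
    have hdiv : Tendsto (fun g => a⁻¹ * g) (𝓝 a) (𝓝 1) := by
      simpa using (tendsto_id (x := 𝓝 a)).const_mul a⁻¹
    refine (tendsto_apply_iff_of_forall_tendstoUniformly hunif hdiv).1 ?_
    refine tendsto_const_nhds.congr fun g => ?_
    rw [Function.comp_apply, ← map_mul, mul_inv_cancel_right]

end Monoid

theorem subgroup_of_grothendieck_monoid_topological_general
    {S : Type*} [Monoid S] [TopologicalSpace S] [CompletelyRegularSpace S]
    [SeparatelyContinuousMul S] (hS : IsPseudocompact S) (G : Set S)
    (hcompact : ∀ f : C(S, ℝ), IsCompact (closure (leftTranslate f '' G)))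
    (hone : (1 : S) ∈ G) (hmulclosed : ∀ a ∈ G, ∀ b ∈ G, a * b ∈ G)
    (hinv : ∀ g ∈ G, ∃ h ∈ G, g * h = 1 ∧ h * g = 1) :
    Continuous (fun p : G × G => (p.1 : S) * (p.2 : S)) ∧
    ∃ inv : G → G, (∀ g : G, (g : S) * (inv g : S) = 1 ∧ (inv g : S) * (g : S) = 1) ∧
      Continuous inv := by
  let H : Submonoid S := ⟨⟨G, @fun a b ha hb => hmulclosed a ha b hb⟩, hone⟩
  choose! i hiG hmul_inv hinv_mul using hinv
  let : Group H := { H.toMonoid with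
    inv := fun g => ⟨i g, hiG g g.2⟩
    inv_mul_cancel := fun g => Subtype.ext (hinv_mul g g.2) }
  have : IsTopologicalGroup H := isTopologicalGroup_of_isInducing (φ := H.subtype) hS
    IsInducing.subtypeVal fun f => image_eq_range (leftTranslate f) G ▸ hcompact f
  exact ⟨continuous_subtype_val.comp (continuous_mul (M := H)), fun g : H => g⁻¹,
    fun g => ⟨hmul_inv g g.2, hinv_mul g g.2⟩, continuous_inv (G := H)⟩

theorem subgroup_of_grothendieck_monoid_topological
    {S : Type*} [Monoid S] [TopologicalSpace S] [T35Space S]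
    (hsep : SeparatelyContinuous fun p : S × S => p.1 * p.2)
    (hGP : GrothendieckPair S S)
    (G : Set S) (hone : (1 : S) ∈ G)
    (hmulclosed : ∀ a ∈ G, ∀ b ∈ G, a * b ∈ G)
    (hinv : ∀ g ∈ G, ∃ h ∈ G, g * h = 1 ∧ h * g = 1) :
    Continuous (fun p : G × G => (p.1 : S) * (p.2 : S)) ∧
    ∃ inv : G → G, (∀ g : G, (g : S) * (inv g : S) = 1 ∧ (inv g : S) * (g : S) = 1) ∧
      Continuous inv := by
  have : SeparatelyContinuousMul S := ⟨hsep.1 _, hsep.2 _⟩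
  exact subgroup_of_grothendieck_monoid_topological_general hGP.isPseudocompact G
    (fun f => (hGP _ (continuous_leftTranslate f)).of_isClosed_subset isClosed_closure
      (closure_mono (image_subset_range _ _))) hone hmulclosed hinv
end
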